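/- Let γ > 0 and let a, b : ℤ → ℝ be bounded sequences with a_n ≥ γ for all n ∈ ℤ. Let J be the bounded self-adjoint Jacobi operator on ℓ²(ℤ; ℂ) defined by (J φ)_n = a_{n−1} φ_{n−1} + a_n φ_{n+1} + b_n φ_n. Suppose there exist positive integers p_1, p_2, … and, for each m, sequences a^{(m)}, b^{(m)} : ℤ → ℝ that are p_m-periodic (a^{(m)}_{n+p_m} = a^{(m)}_n and b^{(m)}_{n+p_m} = b^{(m)}_n for all n) with a^{(m)}_n > 0 for all n, such that for every C > 0, e^{C p_{m+1}} · max( sup_n |a^{(m)}_n − a_n|, sup_n |b^{(m)}_n − b_n| ) → 0 as m → ∞. Then for every τ ∈ (0,1), the spectrum σ(J) = { E ∈ ℝ : J − E is not invertible } is τ-homogeneous. -/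

import Mathlib

open MeasureTheory

/-!
By Floquet theory the spectrum of a `p`-periodic Jacobi operator is `{x | |Δ x| ≤ 2}`, where the
discriminant `Δ` is a polynomial of degree at most `p` for which `Δ - c` is real-rooted whenever
`|c| ≤ 2`. Hence every band is traversed from `-2` to `2`, and since transfer matrices make
`|Δ'| ≤ 2 D ^ (p + 1)` on the spectrum, bands have length at least `2 D⁻¹ ^ (p + 1)`; moreover there
are at most `2 p` band edges, so thickening the spectrum by `d` adds volume at most `4 p d`.

As the approximation is superexponential in the *next* period, for every large `N` some approximant
of period at most `N` has error at most `(D⁻¹ / 4) ^ (N + 1)`. Passing to the limit, the spectrum of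
`J` then loses from a band at level `N` only a volume of order `(D⁻¹ / 2) ^ (N + 1)`, which is
negligible against the lengths `D⁻¹ ^ (N + 1)` and `D⁻¹ ^ (N + 2)` of the scales between which an
interval of given length lies.
-/

section Homogeneity

/-- A set of reals is `τ`-homogeneous if every sufficiently short interval of half-length `δ`
centred at a point of the set meets it in measure at least `τ * δ`. -/
def IsHomogeneous (τ : ℝ) (S : Set ℝ) : Prop :=
  ∃ δ₀ : ℝ, 0 < δ₀ ∧ ∀ x ∈ S, ∀ δ : ℝ, 0 < δ → δ ≤ δ₀ →
    ENNReal.ofReal (τ * δ) ≤ volume (Set.Ioo (x - δ) (x + δ) ∩ S)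

lemma ofReal_sub_abs_le_volume_Ioo_inter_Icc {x y u v δ : ℝ} (hy : y ∈ Set.Icc u v)
    (hδ : 0 ≤ δ) (hδuv : δ ≤ v - u) :
    ENNReal.ofReal (δ - |x - y|) ≤ volume (Set.Ioo (x - δ) (x + δ) ∩ Set.Icc u v) := by
  have hxy := abs_le.mp (le_refl |x - y|)
  calc ENNReal.ofReal (δ - |x - y|)
      ≤ ENNReal.ofReal (min (x + δ) v - max (x - δ) u) := by
        refine ENNReal.ofReal_le_ofReal ?_
        rcases min_choice (x + δ) v with h₁ | h₁ <;> rcases max_choice (x - δ) u with h₂ | h₂ <;>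
          rw [h₁, h₂] <;> linarith [hy.1, hy.2, abs_nonneg (x - y)]
    _ = volume (Set.Ioo (x - δ) (x + δ) ∩ Set.Ioo u v) := by
        rw [Set.Ioo_inter_Ioo, Real.volume_Ioo]
    _ ≤ _ := measure_mono (Set.inter_subset_inter_right _ Set.Ioo_subset_Icc_self)

lemma ofReal_sub_le_volume_Ioo_inter_of_Icc {S : Set ℝ} {x y u v δ η : ℝ}
    (hy : y ∈ Set.Icc u v) (hxy : |x - y| ≤ η) (hδ : 0 ≤ δ) (hδuv : δ ≤ v - u)
    (hS : volume (Set.Icc u v \ S) ≤ ENNReal.ofReal η) :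
    ENNReal.ofReal (δ - 2 * η) ≤ volume (Set.Ioo (x - δ) (x + δ) ∩ S) := by
  have hη : 0 ≤ η := (abs_nonneg _).trans hxy
  set I := Set.Ioo (x - δ) (x + δ)
  calc ENNReal.ofReal (δ - 2 * η) ≤ ENNReal.ofReal (δ - |x - y| - η) :=
        ENNReal.ofReal_le_ofReal (by linarith)
    _ = ENNReal.ofReal (δ - |x - y|) - ENNReal.ofReal η := ENNReal.ofReal_sub _ hη
    _ ≤ volume (I ∩ Set.Icc u v) - volume (Set.Icc u v \ S) :=
        tsub_le_tsub (ofReal_sub_abs_le_volume_Ioo_inter_Icc hy hδ hδuv) hS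
    _ ≤ volume ((I ∩ Set.Icc u v) \ (Set.Icc u v \ S)) := le_measure_sdiff
    _ ≤ volume (I ∩ S) := measure_mono fun z hz =>
        ⟨hz.1.1, by_contra fun hzS => hz.2 ⟨hz.1.2, hzS⟩⟩

lemma exists_scale {ℓ : ℕ → ℝ} (hℓ : Filter.Tendsto ℓ Filter.atTop (nhds 0)) {N : ℕ} {δ : ℝ}
    (hδ : 0 < δ) (hδN : δ ≤ ℓ N) : ∃ n ≥ N, ℓ (n + 1) < δ ∧ δ ≤ ℓ n := by
  by_contra! hstep
  have hle : ∀ n ≥ N, δ ≤ ℓ n := fun n hn =>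
    Nat.le_induction hδN (fun n hn h => not_lt.mp fun hlt => absurd h (hstep n hn hlt).not_ge) n hn
  obtain ⟨n, hn, hNn⟩ := ((hℓ.eventually_lt_const hδ).and (Filter.eventually_ge_atTop N)).exists
  exact (hle n hNn).not_gt hn

/-- At the scale `ℓ (N + 1) < δ ≤ ℓ N` both the distance to the nearby interval and the part of
it missing from `S` are at most `η N`, which is negligible against `δ`. -/
lemma isHomogeneous_of_forall_exists_Icc {S : Set ℝ} {ℓ η : ℕ → ℝ} {N₀ : ℕ}
    (hℓ_pos : ∀ N, 0 < ℓ N) (hℓ : Filter.Tendsto ℓ Filter.atTop (nhds 0))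
    (hη : Filter.Tendsto (fun N => η N / ℓ (N + 1)) Filter.atTop (nhds 0))
    (hS : ∀ N ≥ N₀, ∀ x ∈ S, ∃ u v, ∃ y ∈ Set.Icc u v, |x - y| ≤ η N ∧ ℓ N ≤ v - u ∧
      volume (Set.Icc u v \ S) ≤ ENNReal.ofReal (η N))
    {τ : ℝ} (hτ : τ < 1) : IsHomogeneous τ S := by
  have hsmall : ∀ᶠ N in Filter.atTop, η N / ℓ (N + 1) < (1 - τ) / 2 :=
    hη.eventually_lt_const (by linarith)
  obtain ⟨N₁, hN₁⟩ := Filter.eventually_atTop.mp hsmall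
  refine ⟨ℓ (max N₀ N₁), hℓ_pos _, fun x hx δ hδ hδle => ?_⟩
  obtain ⟨N, hN, hlt, hle⟩ := exists_scale hℓ hδ hδle
  obtain ⟨u, v, y, hy, hxy, huv, hvol⟩ := hS N ((le_max_left _ _).trans hN) x hx
  have hηN : η N < (1 - τ) / 2 * ℓ (N + 1) :=
    (div_lt_iff₀ (hℓ_pos _)).mp (hN₁ N ((le_max_right _ _).trans hN))
  refine (ENNReal.ofReal_le_ofReal ?_).trans
    (ofReal_sub_le_volume_Ioo_inter_of_Icc hy hxy hδ.le (hle.trans huv) hvol)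
  nlinarith

lemma measure_sdiff_le_tsum {α : Type*} [MeasurableSpace α] (μ : Measure α) (S : ℕ → Set α)
    {T : Set α} (hT : ∀ y, (∀ j, y ∈ S j) → y ∈ T) :
    μ (S 0 \ T) ≤ ∑' j, μ (S j \ S (j + 1)) := by
  refine (measure_mono fun y hy => ?_).trans (measure_iUnion_le _)
  by_contra hnot
  simp only [Set.mem_iUnion, Set.mem_sdiff, not_exists, not_and, not_not] at hnot
  exact hy.2 (hT y fun j => Nat.rec hy.1 (fun j hj => hnot j hj) j)

lemma mem_of_isClosed_of_forall_exists_dist_le {α : Type*} [PseudoMetricSpace α] {S : Set α}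
    (hS : IsClosed S) {x : α} {ε : ℕ → ℝ} (hε : Filter.Tendsto ε Filter.atTop (nhds 0))
    (h : ∀ n, ∃ y ∈ S, dist x y ≤ ε n) : x ∈ S := by
  choose y hyS hxy using h
  have hy : Filter.Tendsto y Filter.atTop (nhds x) := tendsto_iff_dist_tendsto_zero.mpr <|
    squeeze_zero (fun _ => dist_nonneg) (fun n => dist_comm (y n) x ▸ hxy n) hε
  exact hS.mem_of_tendsto hy (.of_forall hyS)

lemma natCast_mul_div_four_pow_le {r : ℝ} (hr : 0 ≤ r) (n : ℕ) :
    n * (r / 4) ^ n ≤ (r / 2) ^ n := by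
  calc (n : ℝ) * (r / 4) ^ n ≤ 2 ^ n * (r / 4) ^ n := by
        gcongr
        exact_mod_cast n.lt_two_pow_self.le
    _ = (r / 2) ^ n := by rw [← mul_pow]; ring

lemma tsum_ofReal_half_pow_le {r : ℝ} (hr : 0 ≤ r) (hr₁ : r ≤ 1) {c : ℝ} (hc : 0 ≤ c) (n : ℕ) :
    ∑' j : ℕ, ENNReal.ofReal (c * (r / 2) ^ (n + j)) ≤ ENNReal.ofReal (2 * c * (r / 2) ^ n) := by
  have hsum : HasSum (fun j : ℕ => c * (r / 2) ^ (n + j)) (c * (r / 2) ^ n * (1 - r / 2)⁻¹) := by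
    simpa only [pow_add, mul_assoc] using
      (hasSum_geometric_of_lt_one (by positivity : 0 ≤ r / 2) (by linarith)).mul_left
        (c * (r / 2) ^ n)
  rw [← ENNReal.ofReal_tsum_of_nonneg (fun j => by positivity) hsum.summable, hsum.tsum_eq]
  refine ENNReal.ofReal_le_ofReal ?_
  have hinv : (1 - r / 2)⁻¹ ≤ 2 := inv_le_of_inv_le₀ (by norm_num) (by norm_num; linarith)
  calc c * (r / 2) ^ n * (1 - r / 2)⁻¹ ≤ c * (r / 2) ^ n * 2 := by gcongr
    _ = 2 * c * (r / 2) ^ n := by ring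

/-- `S` approximates `T` by bands at rate `r` and level `N`: it is exponentially close to `T`, much
closer than the length of the bands that make up `S`, and it has so few bands that the volume of
its neighbourhoods grows at most linearly, with slope proportional to `N`. -/
structure IsBandApproximation (r : ℝ) (N : ℕ) (S T : Set ℝ) : Prop where
  exists_dist_le_of_mem : ∀ x ∈ T, ∃ y ∈ S, dist x y ≤ 3 * (r / 4) ^ (N + 1)
  exists_dist_le_of_mem_approx : ∀ y ∈ S, ∃ x ∈ T, dist y x ≤ 3 * (r / 4) ^ (N + 1)
  exists_band : ∀ y ∈ S, ∃ u v, y ∈ Set.Icc u v ∧ Set.Icc u v ⊆ S ∧ 2 * r ^ (N + 1) ≤ v - u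
  volume_sdiff_le : ∀ (U : Set ℝ) (d : ℝ), 0 ≤ d → (∀ x ∈ U, ∃ y ∈ S, dist x y ≤ d) →
    volume (U \ S) ≤ ENNReal.ofReal (4 * N * d)

namespace IsBandApproximation

variable {r : ℝ} {N : ℕ} {T : Set ℝ}

lemma volume_sdiff_succ_le {S S' : Set ℝ} (h : IsBandApproximation r N S T)
    (h' : IsBandApproximation r (N + 1) S' T) (hr : 0 < r) (hr₁ : r < 1) :
    volume (S \ S') ≤ ENNReal.ofReal (24 * (r / 2) ^ (N + 1)) := by
  have hdist : ∀ y ∈ S, ∃ y' ∈ S', dist y y' ≤ 6 * (r / 4) ^ (N + 1) := by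
    intro y hy
    obtain ⟨x, hxT, hyx⟩ := h.exists_dist_le_of_mem_approx y hy
    obtain ⟨y', hy', hxy'⟩ := h'.exists_dist_le_of_mem x hxT
    have hpow : (r / 4) ^ (N + 1 + 1) ≤ (r / 4) ^ (N + 1) :=
      pow_le_pow_of_le_one (by positivity) (by linarith) (Nat.le_succ _)
    exact ⟨y', hy', by linarith [dist_triangle y x y']⟩
  refine (h'.volume_sdiff_le _ _ (by positivity) hdist).trans (ENNReal.ofReal_le_ofReal ?_)
  linarith [natCast_mul_div_four_pow_le hr.le (N + 1)]

lemma mem_of_forall_mem {S : ℕ → Set ℝ} (h : ∀ j, IsBandApproximation r (N + j) (S j) T)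
    (hT : IsClosed T) (hr : 0 < r) (hr₁ : r < 1) {y : ℝ} (hy : ∀ j, y ∈ S j) : y ∈ T := by
  refine mem_of_isClosed_of_forall_exists_dist_le hT ?_ fun j =>
    (h j).exists_dist_le_of_mem_approx y (hy j)
  have hpow := (tendsto_pow_atTop_nhds_zero_of_lt_one (by positivity : 0 ≤ r / 4)
    (by linarith)).const_mul 3
  rw [mul_zero] at hpow
  exact hpow.comp ((Filter.tendsto_add_atTop_nat 1).comp
    (Filter.tendsto_atTop_mono (fun j => Nat.le_add_left j N) Filter.tendsto_id))

lemma volume_sdiff_target_le {S : ℕ → Set ℝ} (h : ∀ j, IsBandApproximation r (N + j) (S j) T)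
    (hT : IsClosed T) (hr : 0 < r) (hr₁ : r < 1) :
    volume (S 0 \ T) ≤ ENNReal.ofReal (48 * (r / 2) ^ (N + 1)) := by
  calc volume (S 0 \ T) ≤ ∑' j, volume (S j \ S (j + 1)) :=
        measure_sdiff_le_tsum volume S fun _ => mem_of_forall_mem h hT hr hr₁
    _ ≤ ∑' j : ℕ, ENNReal.ofReal (24 * (r / 2) ^ (N + 1 + j)) :=
        ENNReal.tsum_le_tsum fun j =>
          ((h j).volume_sdiff_succ_le (h (j + 1)) hr hr₁).trans_eq (by rw [Nat.add_right_comm])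
    _ ≤ ENNReal.ofReal (2 * 24 * (r / 2) ^ (N + 1)) :=
        tsum_ofReal_half_pow_le hr.le hr₁.le (by norm_num) _
    _ = _ := by norm_num

lemma isHomogeneous_of_forall_exists {N₀ : ℕ}
    (h : ∀ N ≥ N₀, ∃ S, IsBandApproximation r N S T) (hT : IsClosed T) (hr : 0 < r) (hr₁ : r < 1)
    {τ : ℝ} (hτ : τ < 1) : IsHomogeneous τ T := by
  choose! S hS using h
  have htendsto {q : ℝ} (hq : 0 ≤ q) (hq₁ : q < 1) (c : ℝ) :
      Filter.Tendsto (fun N : ℕ => c * q ^ (N + 1)) Filter.atTop (nhds 0) := by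
    simpa only [mul_zero, Function.comp_def] using ((tendsto_pow_atTop_nhds_zero_of_lt_one hq
      hq₁).comp (Filter.tendsto_add_atTop_nat 1)).const_mul c
  have hratio : ∀ N : ℕ, 48 * (r / 2) ^ (N + 1) / (2 * r ^ (N + 1 + 1)) =
      24 / r * (1 / 2) ^ (N + 1) := fun N => by
    field_simp
    ring
  refine isHomogeneous_of_forall_exists_Icc (ℓ := fun N => 2 * r ^ (N + 1))
    (η := fun N => 48 * (r / 2) ^ (N + 1)) (N₀ := N₀) (fun N => by positivity)
    (htendsto hr.le hr₁ 2) ?_ (fun N hN x hx => ?_) hτ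
  · simpa only [hratio] using htendsto (by norm_num) (by norm_num) (24 / r)
  obtain ⟨y, hy, hxy⟩ := (hS N hN).exists_dist_le_of_mem x hx
  obtain ⟨u, v, hyuv, hsub, hlen⟩ := (hS N hN).exists_band y hy
  refine ⟨u, v, y, hyuv, hxy.trans ?_, hlen, (measure_mono (Set.sdiff_subset_sdiff_left hsub)).trans
    (volume_sdiff_target_le (S := fun j => S (N + j)) (fun j => hS _ (by omega)) hT hr hr₁)⟩
  have hpow : (r / 4) ^ (N + 1) ≤ (r / 2) ^ (N + 1) := by gcongr; norm_num
  have hpos : 0 ≤ (r / 2) ^ (N + 1) := by positivity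
  linarith

end IsBandApproximation

end Homogeneity

section Rescaling

lemma exists_le_and_lt_succ {p : ℕ → ℕ} {m₀ N : ℕ} (hm₀ : p m₀ ≤ N)
    (hN : ∃ m ≥ m₀, N < p (m + 1)) : ∃ m ≥ m₀, p m ≤ N ∧ N < p (m + 1) := by
  classical
  obtain ⟨hge, hlt⟩ := Nat.find_spec hN
  refine ⟨Nat.find hN, hge, ?_, hlt⟩
  rcases hge.eq_or_lt with heq | hgt
  · rwa [← heq]
  obtain ⟨k, hk⟩ := Nat.exists_eq_add_of_lt hgt
  have hmin := Nat.find_min hN (m := m₀ + k) (by omega)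
  push Not at hmin
  rw [hk]
  exact hmin (by omega)

/-- If the periods are bounded, the approximants of large index are arbitrarily good; otherwise
one takes the last index `m` with `p m ≤ N < p (m + 1)`. -/
lemma exists_period_le_and_error_le {ι : Type*} {p : ℕ → ℕ} {e : ℕ → ι → ℝ}
    (he₀ : ∀ m i, 0 ≤ e m i)
    (he : ∀ C : ℝ, 0 < C → ∀ ε : ℝ, 0 < ε → ∃ m₀ : ℕ, ∀ m ≥ m₀, ∀ i,
      Real.exp (C * p (m + 1)) * e m i < ε) {θ : ℝ} (hθ : 0 < θ) (hθ₁ : θ < 1) :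
    ∃ N₀, ∀ N ≥ N₀, ∃ m, p m ≤ N ∧ ∀ i, e m i ≤ θ ^ (N + 1) := by
  have hC : 0 < -Real.log θ := neg_pos.mpr (Real.log_neg hθ hθ₁)
  have hexp : ∀ n : ℕ, Real.exp (-Real.log θ * n) * θ ^ n = 1 := fun n => by
    rw [mul_comm (-_), Real.exp_nat_mul, Real.exp_neg, Real.exp_log hθ, ← mul_pow,
      inv_mul_cancel₀ hθ.ne', one_pow]
  obtain ⟨m₀, hm₀⟩ := he _ hC 1 one_pos
  have herr : ∀ m ≥ m₀, ∀ i, e m i ≤ θ ^ p (m + 1) := fun m hm i => by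
    have h := (hm₀ m hm i).le.trans_eq (hexp (p (m + 1))).symm
    exact le_of_mul_le_mul_left h (Real.exp_pos _)
  refine ⟨p m₀, fun N hN => ?_⟩
  by_cases hunbdd : ∃ m ≥ m₀, N < p (m + 1)
  · obtain ⟨m, hm, hle, hlt⟩ := exists_le_and_lt_succ hN hunbdd
    exact ⟨m, hle, fun i =>
      (herr m hm i).trans (pow_le_pow_of_le_one hθ.le hθ₁.le (Nat.succ_le_of_lt hlt))⟩
  · push Not at hunbdd
    obtain ⟨m₁, hm₁⟩ := he 1 one_pos (θ ^ (N + 1)) (by positivity)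
    refine ⟨max m₀ m₁ + 1, hunbdd _ (le_max_left _ _), fun i => ?_⟩
    refine le_trans ?_ (hm₁ (max m₀ m₁ + 1) (by omega) i).le
    exact le_mul_of_one_le_left (he₀ _ _) (Real.one_le_exp (by positivity))

end Rescaling

section SpectralPerturbation

variable {A : Type*} [CStarAlgebra A]

lemma exists_mem_spectrum_norm_eq_inv_norm_inv [Nontrivial A] (u : Aˣ) [IsStarNormal (u : A)] :
    ∃ w ∈ spectrum ℂ (u : A), ‖w‖ = ‖(↑u⁻¹ : A)‖⁻¹ := by
  have : IsStarNormal (↑u⁻¹ : A) := IsStarNormal.val_inv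
  obtain ⟨w, hw, hnorm⟩ := spectrum.exists_nnnorm_eq_spectralRadius (↑u⁻¹ : A)
  rw [IsStarNormal.spectralRadius_eq_nnnorm, ENNReal.coe_inj] at hnorm
  refine ⟨w⁻¹, spectrum.inv₀_mem_iff.mpr hw, ?_⟩
  rw [norm_inv, ← coe_nnnorm, hnorm, coe_nnnorm]

lemma isStarNormal_algebraMap_sub (K : A) [hK : IsStarNormal K] (z : ℂ) :
    IsStarNormal (algebraMap ℂ A z - K) := by
  refine ⟨?_⟩
  rw [star_sub, ← algebraMap_star_comm]
  exact (Algebra.commute_algebraMap_left _ _).sub_left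
    ((Algebra.commute_algebraMap_right _ _).sub_right hK.star_comm_self)

lemma exists_mem_spectrum_norm_sub_le {J K : A} [IsStarNormal K] {z : ℂ}
    (hz : z ∈ spectrum ℂ J) : ∃ w ∈ spectrum ℂ K, ‖z - w‖ ≤ ‖J - K‖ := by
  have : Nontrivial A := not_subsingleton_iff_nontrivial.mp fun _ => by
    simp only [spectrum.of_subsingleton, Set.mem_empty_iff_false] at hz
  by_cases hzK : z ∈ spectrum ℂ K
  · exact ⟨z, hzK, by simp⟩
  obtain ⟨u, hu⟩ := spectrum.notMem_iff.mp hzK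
  have : IsStarNormal (u : A) := hu ▸ isStarNormal_algebraMap_sub K z
  obtain ⟨w', hw', hnorm⟩ := exists_mem_spectrum_norm_eq_inv_norm_inv u
  rw [hu, ← spectrum.singleton_sub_eq] at hw'
  obtain ⟨_, hz', w, hw, rfl⟩ := hw'
  rw [Set.mem_singleton_iff.mp hz'] at hnorm
  refine ⟨w, hw, not_lt.mp fun hlt => hz ?_⟩
  refine (u.ofNearby (algebraMap ℂ A z - J) ?_).isUnit
  rwa [hu, sub_sub_sub_cancel_left, ← hnorm, norm_sub_rev]

lemma exists_mem_spectrum_real_dist_le {J K : A} (hK : IsSelfAdjoint K) {x : ℝ}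
    (hx : x ∈ spectrum ℝ J) : ∃ y ∈ spectrum ℝ K, dist x y ≤ ‖J - K‖ := by
  have := hK.isStarNormal
  obtain ⟨w, hw, hle⟩ := exists_mem_spectrum_norm_sub_le (K := K) (spectrum.algebraMap_mem ℂ hx)
  rw [← hK.spectrumRestricts.algebraMap_image] at hw
  obtain ⟨y, hy, rfl⟩ := hw
  exact ⟨y, hy, by rwa [← map_sub, norm_algebraMap'] at hle⟩

lemma spectrum_real_nonempty [Nontrivial A] {K : A} (hK : IsSelfAdjoint K) :
    (spectrum ℝ K).Nonempty := by
  have hne := spectrum.nonempty K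
  rwa [← hK.spectrumRestricts.algebraMap_image, Set.image_nonempty] at hne

lemma abs_eval_le_norm_aeval [Nontrivial A] {K : A} (f : Polynomial ℝ) {x : ℝ}
    (hx : x ∈ spectrum ℝ K) : |f.eval x| ≤ ‖Polynomial.aeval K f‖ :=
  spectrum.norm_le_norm_of_mem (spectrum.subset_polynomial_aeval K f ⟨x, hx, rfl⟩)

end SpectralPerturbation

section RealRootedPolynomials

open Polynomial

/-- The Laguerre expression `f' ^ 2 - f * f''`, which is nonnegative on the real line for
real-rooted `f`. -/
noncomputable def laguerre {R : Type*} [CommRing R] (f : R[X]) : R[X] :=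
  derivative f ^ 2 - f * derivative (derivative f)

lemma laguerre_mul {R : Type*} [CommRing R] (f g : R[X]) :
    laguerre (f * g) = f ^ 2 * laguerre g + g ^ 2 * laguerre f := by
  simp only [laguerre, derivative_mul, derivative_add]
  ring

lemma laguerre_eval_nonneg {f : ℝ[X]} (hf : f.Splits) (x : ℝ) : 0 ≤ (laguerre f).eval x := by
  induction hf using Submonoid.closure_induction with
  | mem g hg =>
    rcases hg with ⟨a, rfl⟩ | ⟨a, rfl⟩ <;> simp [laguerre]
  | one => simp [laguerre]
  | mul g h _ _ hg hh =>
    rw [laguerre_mul, eval_add, eval_mul, eval_mul, eval_pow, eval_pow]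
    positivity

lemma laguerre_eval_pos {f : ℝ[X]} (hf : f.Splits) (hdeg : 0 < f.degree) {x : ℝ}
    (hx : f.eval x ≠ 0) : 0 < (laguerre f).eval x := by
  obtain ⟨r, hr⟩ := hf.exists_eval_eq_zero hdeg.ne'
  obtain ⟨g, rfl⟩ := dvd_iff_isRoot.mpr hr
  have hg : g.eval x ≠ 0 := right_ne_zero_of_mul (eval_mul (R := ℝ) ▸ hx)
  have hnonneg := laguerre_eval_nonneg (splits_X_sub_C_mul_iff.mp hf) x
  have hlinear : laguerre (X - C r) = 1 := by simp [laguerre]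
  rw [laguerre_mul, hlinear, mul_one, eval_add, eval_mul, eval_pow, eval_pow]
  positivity

lemma splits_of_forall_complex_root_im_eq_zero {f : ℝ[X]}
    (hf : ∀ z : ℂ, (f.map Complex.ofRealHom).IsRoot z → z.im = 0) : f.Splits :=
  (IsAlgClosed.splits _).of_splits_map Complex.ofRealHom fun z hz =>
    ⟨z.re, Complex.ext rfl (hf z (isRoot_of_mem_roots hz)).symm⟩

variable {f : ℝ[X]} {c : ℝ}

lemma derivative_derivative_eval_pos_of_lt (hf : (f - C c).Splits) (hdeg : 0 < f.degree)
    {x : ℝ} (hlt : f.eval x < c) (hcrit : f.derivative.eval x = 0) :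
    0 < f.derivative.derivative.eval x := by
  have hdeg' : 0 < (f - C c).degree := by rwa [degree_sub_C hdeg]
  have hpos := laguerre_eval_pos hf hdeg' (x := x) (by simpa [sub_eq_zero] using hlt.ne)
  simp only [laguerre, derivative_sub, derivative_C, sub_zero, eval_sub, eval_pow, hcrit, eval_mul,
    eval_C, ne_eq, OfNat.ofNat_ne_zero, not_false_eq_true, zero_pow, zero_sub] at hpos
  exact pos_of_mul_neg_right (by linarith) (sub_neg.mpr hlt).le

lemma eval_le_max_of_forall_lt (hf : (f - C c).Splits) (hdeg : 0 < f.degree) {s t x : ℝ}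
    (hx : x ∈ Set.Icc s t) (hlt : ∀ y ∈ Set.Icc s t, f.eval y < c) :
    f.eval x ≤ max (f.eval s) (f.eval t) := by
  obtain ⟨m, hm, hmax⟩ := isCompact_Icc.exists_isMaxOn ⟨x, hx⟩ f.continuous.continuousOn
  refine (hmax hx).trans ?_
  rcases hm.1.eq_or_lt with rfl | hsm
  · exact le_max_left _ _
  rcases hm.2.eq_or_lt with rfl | hmt
  · exact le_max_right _ _
  have hlocmax : IsLocalMax f.eval m := hmax.isLocalMax (Icc_mem_nhds hsm hmt)
  have hcrit : f.derivative.eval m = 0 := by simpa using hlocmax.deriv_eq_zero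
  have hderiv : deriv f.eval = f.derivative.eval := funext fun _ => f.deriv
  have hpos : 0 < f.derivative.derivative.eval m :=
    derivative_derivative_eval_pos_of_lt hf hdeg (hlt m hm) hcrit
  have hlocmin : IsLocalMin f.eval m := isLocalMin_of_deriv_deriv_pos
    (by rwa [hderiv, Polynomial.deriv]) (by rwa [hderiv]) f.continuous.continuousAt
  have hconst : f.eval =ᶠ[nhds m] fun _ => f.eval m :=
    hlocmax.and hlocmin |>.mono fun y hy => le_antisymm hy.1 hy.2
  have hzero := hconst.deriv.deriv_eq
  simp only [hderiv, Polynomial.deriv, deriv_const', deriv_const] at hzero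
  exact absurd hzero hpos.ne'

/-- `g` first reaches the level `c` at the infimum of `{t ≥ x | c ≤ g t}`. -/
lemma exists_ge_eq_and_forall_abs_le {g : ℝ → ℝ} (hg : Continuous g)
    (htop : Filter.Tendsto (fun t => |g t|) Filter.atTop Filter.atTop) {x : ℝ} (hx : |g x| ≤ c)
    (hstay : ∀ t ≥ x, (∀ s ∈ Set.Icc x t, g s < c) → -c ≤ g t) :
    ∃ y ≥ x, g y = c ∧ ∀ s ∈ Set.Icc x y, |g s| ≤ c := by
  set T := {t | x ≤ t ∧ c ≤ g t}
  have hT_closed : IsClosed T :=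
    (isClosed_le continuous_const continuous_id).inter (isClosed_le continuous_const hg)
  have hT_bdd : BddBelow T := ⟨x, fun t ht => ht.1⟩
  have hT_ne : T.Nonempty := by
    by_contra hempty
    have hlt : ∀ t ≥ x, g t < c := fun t ht => not_le.mp fun h => hempty ⟨t, ht, h⟩
    obtain ⟨t, ht, hct⟩ :=
      ((Filter.eventually_ge_atTop x).and (htop.eventually_gt_atTop c)).exists
    exact hct.not_ge (abs_le.mpr ⟨hstay t ht fun s hs => hlt s hs.1, (hlt t ht).le⟩)
  have hlt : ∀ s, x ≤ s → s < sInf T → g s < c := fun s hxs hs =>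
    not_le.mp fun h => hs.not_ge (csInf_le hT_bdd ⟨hxs, h⟩)
  have habs : ∀ s, x ≤ s → s < sInf T → |g s| ≤ c := fun s hxs hs =>
    abs_le.mpr ⟨hstay s hxs fun s' hs' => hlt s' hs'.1 (hs'.2.trans_lt hs), (hlt s hxs hs).le⟩
  obtain ⟨hxy, hcy⟩ := hT_closed.csInf_mem hT_ne hT_bdd
  have hy : |g (sInf T)| ≤ c := by
    rcases hxy.eq_or_lt with heq | hxlt
    · rwa [← heq]
    refine le_of_tendsto (hg.abs.tendsto (sInf T) |>.mono_left nhdsWithin_le_nhds)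
      (Filter.mem_of_superset (Ioo_mem_nhdsLT hxlt) fun s hs => habs s hs.1.le hs.2)
  refine ⟨sInf T, hxy, le_antisymm (le_of_abs_le hy) hcy, fun s hs => ?_⟩
  rcases hs.2.eq_or_lt with rfl | hlt'
  exacts [hy, habs s hs.1 hlt']

/-- Below the level `c` the polynomial is quasiconvex, so it cannot drop below `-c` on both sides
of `x` before reaching `c`. -/
lemma exists_eval_eq_and_forall_uIcc_abs_le (hf : (f - C c).Splits) (hdeg : 0 < f.degree) {x : ℝ}
    (hx : |f.eval x| ≤ c) :
    ∃ y, f.eval y = c ∧ ∀ s ∈ Set.uIcc x y, |f.eval s| ≤ c := by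
  by_cases hright : ∀ t ≥ x, (∀ s ∈ Set.Icc x t, f.eval s < c) → -c ≤ f.eval t
  · obtain ⟨y, hxy, hy⟩ := exists_ge_eq_and_forall_abs_le f.continuous
      (f.tendsto_norm_atTop hdeg tendsto_norm_atTop_atTop) hx hright
    exact ⟨y, by rwa [Set.uIcc_of_le hxy]⟩
  push Not at hright
  obtain ⟨t₂, hxt₂, hlt₂, hft₂⟩ := hright
  obtain ⟨y, hxy, hfy, hle⟩ := exists_ge_eq_and_forall_abs_le (g := fun t => f.eval (-t)) (x := -x)
    (c := c) (by fun_prop)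
    (f.tendsto_norm_atTop hdeg (by simpa only [norm_neg] using tendsto_norm_atTop_atTop))
    (by rwa [neg_neg]) fun t₁ hxt₁ hlt₁ => by
      by_contra! hft₁
      have hmax := eval_le_max_of_forall_lt hf hdeg (s := -t₁) (t := t₂) (x := x)
        ⟨by linarith, hxt₂⟩ fun s hs => by
          rcases le_total x s with h | h
          · exact hlt₂ s ⟨h, hs.2⟩
          · simpa using hlt₁ (-s) ⟨by linarith, by linarith [hs.1]⟩
      exact (hmax.trans_lt (max_lt hft₁ hft₂)).not_ge (abs_le.mp hx).1
  refine ⟨-y, hfy, fun s hs => ?_⟩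
  rw [Set.uIcc_of_ge (by linarith)] at hs
  simpa using hle (-s) ⟨by linarith [hs.2], by linarith [hs.1]⟩

lemma Icc_min_max_subset_union_uIcc (x y₁ y₂ : ℝ) :
    Set.Icc (min x (min y₁ y₂)) (max x (max y₁ y₂)) ⊆ Set.uIcc x y₁ ∪ Set.uIcc x y₂ := by
  intro z hz
  simp only [Set.mem_Icc, min_le_iff, le_max_iff, Set.mem_union, Set.mem_uIcc] at hz ⊢
  grind

/-- The interval around `x` is long enough for `f` to cross from `-c` to `c`. -/
lemma exists_Icc_subset_abs_eval_le (hdeg : 0 < f.degree) (hf : (f - C c).Splits)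
    (hf' : (f + C c).Splits) {L : ℝ} (hL : ∀ x, |f.eval x| ≤ c → |f.derivative.eval x| ≤ L) {x : ℝ}
    (hx : |f.eval x| ≤ c) :
    ∃ u v, x ∈ Set.Icc u v ∧ Set.Icc u v ⊆ {y | |f.eval y| ≤ c} ∧ 2 * c ≤ L * (v - u) := by
  obtain ⟨y₁, hy₁, hle₁⟩ := exists_eval_eq_and_forall_uIcc_abs_le hf hdeg hx
  obtain ⟨y₂, hy₂, hle₂⟩ := exists_eval_eq_and_forall_uIcc_abs_le (f := -f) (c := c)
    (by simpa only [neg_add'] using hf'.neg) (by rwa [degree_neg]) (by rwa [eval_neg, abs_neg])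
  simp only [eval_neg, abs_neg] at hy₂ hle₂
  set u := min x (min y₁ y₂)
  set v := max x (max y₁ y₂)
  have hsub : Set.Icc u v ⊆ {y | |f.eval y| ≤ c} :=
    (Icc_min_max_subset_union_uIcc x y₁ y₂).trans (Set.union_subset hle₁ hle₂)
  have hmem₁ : y₁ ∈ Set.Icc u v := by simp [u, v]
  have hmem₂ : y₂ ∈ Set.Icc u v := by simp [u, v]
  refine ⟨u, v, by simp [u, v], hsub, ?_⟩
  have hmvt := (convex_Icc u v).norm_image_sub_le_of_norm_hasDerivWithin_le
    (fun z _ => (f.hasDerivAt z).hasDerivWithinAt) (fun z hz => hL z (hsub hz)) hmem₂ hmem₁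
  have hL₀ : 0 ≤ L := (abs_nonneg _).trans (hL x hx)
  calc 2 * c = f.eval y₁ - f.eval y₂ := by linarith
    _ ≤ L * ‖y₁ - y₂‖ := (le_abs_self _).trans hmvt
    _ ≤ L * (v - u) := by
        gcongr
        exact abs_sub_le_iff.mpr
          ⟨by linarith [hmem₁.2, hmem₂.1], by linarith [hmem₁.1, hmem₂.2]⟩

lemma volume_sdiff_sublevel_le {g : ℝ → ℝ} (hg : Continuous g) {F : Finset ℝ}
    (hF : ∀ z, g z = c → z ∈ F) {U : Set ℝ} {d : ℝ} (hU : ∀ x ∈ U, ∃ y, g y ≤ c ∧ dist x y ≤ d) :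
    volume (U \ {y | g y ≤ c}) ≤ ENNReal.ofReal (2 * F.card * d) := by
  have hsub : U \ {y | g y ≤ c} ⊆ ⋃ z ∈ F, Metric.closedBall z d := by
    rintro x ⟨hxU, hx⟩
    obtain ⟨y, hy, hxy⟩ := hU x hxU
    obtain ⟨z, hz, hgz⟩ := intermediate_value_uIcc hg.continuousOn
      (Set.Icc_subset_uIcc' ⟨hy, (not_le.mp hx).le⟩)
    refine Set.mem_biUnion (hF z hgz) ?_
    exact Metric.mem_closedBall.mpr ((Real.dist_left_le_of_mem_uIcc hz).trans hxy)
  calc volume (U \ {y | g y ≤ c}) ≤ ∑ z ∈ F, volume (Metric.closedBall z d) :=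
        (measure_mono hsub).trans (measure_biUnion_finset_le _ _)
    _ = ENNReal.ofReal (2 * F.card * d) := by
        simp only [Real.volume_closedBall, Finset.sum_const, nsmul_eq_mul]
        rw [← ENNReal.ofReal_natCast, ← ENNReal.ofReal_mul (by positivity)]
        ring_nf

lemma volume_sdiff_abs_eval_le (hdeg : 0 < f.degree) {U : Set ℝ} {d : ℝ} (hd : 0 ≤ d)
    (hU : ∀ x ∈ U, ∃ y, |f.eval y| ≤ c ∧ dist x y ≤ d) :
    volume (U \ {y | |f.eval y| ≤ c}) ≤ ENNReal.ofReal (4 * f.natDegree * d) := by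
  have hroots : ∀ z, |f.eval z| = c →
      z ∈ (f - C c).roots.toFinset ∪ (f - C (-c)).roots.toFinset := by
    intro z hz
    simp only [Finset.mem_union, Multiset.mem_toFinset, mem_roots_sub_C hdeg]
    exact eq_or_eq_neg_of_abs_eq hz
  have hcard : ∀ e : ℝ, (f - C e).roots.toFinset.card ≤ f.natDegree := fun e =>
    (Multiset.toFinset_card_le _).trans (card_roots_sub_C' hdeg)
  refine (volume_sdiff_sublevel_le f.continuous.abs hroots hU).trans (ENNReal.ofReal_le_ofReal ?_)
  have hunion := (Finset.card_union_le _ _).trans (Nat.add_le_add (hcard c) (hcard (-c)))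
  refine mul_le_mul_of_nonneg_right ?_ hd
  calc 2 * (((f - C c).roots.toFinset ∪ (f - C (-c)).roots.toFinset).card : ℝ)
      ≤ 2 * (f.natDegree + f.natDegree : ℕ) := by gcongr
    _ = 4 * f.natDegree := by push_cast; ring

end RealRootedPolynomials

section JacobiRecurrence

variable {𝕜 A V : Type*} [Field 𝕜] [CommRing A] [AddCommGroup V] [Module 𝕜 V]
  [Module A V]

/-- The three-term recurrence `J u = z u` of the Jacobi matrix with off-diagonal entries `a` and
diagonal entries `b`, at all indices `n + 1`. The spectral parameter `z` may be a number, the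
polynomial variable or an operator. -/
def IsJacobiSolution (a b : ℕ → 𝕜) (z : A) (u : ℕ → V) : Prop :=
  ∀ n, a n • u n + a (n + 1) • u (n + 2) + b (n + 1) • u (n + 1) = z • u (n + 1)

variable {a b : ℕ → 𝕜} {z : A} {p : ℕ}

namespace IsJacobiSolution

variable {u v : ℕ → V}

lemma ext (ha : ∀ n, a n ≠ 0) (hu : IsJacobiSolution a b z u) (hv : IsJacobiSolution a b z v)
    (h₀ : u 0 = v 0) (h₁ : u 1 = v 1) : u = v := by
  funext n
  induction n using Nat.twoStepInduction with
  | zero => exact h₀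
  | one => exact h₁
  | more n ih₀ ih₁ =>
    have hrec := (hu n).trans ((congrArg (z • ·) ih₁).trans (hv n).symm)
    rw [ih₀, ih₁, add_left_inj, add_right_inj] at hrec
    exact smul_right_injective V (ha (n + 1)) hrec

lemma add (hu : IsJacobiSolution a b z u) (hv : IsJacobiSolution a b z v) :
    IsJacobiSolution a b z (u + v) := fun n => by
  simp only [Pi.add_apply, smul_add, ← hu n, ← hv n]
  abel

lemma shift (hu : IsJacobiSolution a b z u) (hap : Function.Periodic a p)
    (hbp : Function.Periodic b p) : IsJacobiSolution a b z (fun n => u (n + p)) := fun n => by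
  simpa only [Nat.add_right_comm _ p, hap n, hap (n + 1), hbp (n + 1)] using hu (n + p)

end IsJacobiSolution

variable [Algebra 𝕜 A] [IsScalarTower 𝕜 A V]

/-- The solution of the Jacobi recurrence with initial values `x` and `y`, for nonvanishing `a`. -/
def jacobiSol (a b : ℕ → 𝕜) (z x y : A) : ℕ → A
  | 0 => x
  | 1 => y
  | n + 2 => (a (n + 1))⁻¹ • (z * jacobiSol a b z x y (n + 1) -
      b (n + 1) • jacobiSol a b z x y (n + 1) - a n • jacobiSol a b z x y n)

/-- The discriminant of `p`-periodic Jacobi data: the trace of the monodromy matrix, which maps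
`(u 0, u 1)` to `(u p, u (p + 1))`. -/
def discriminant (a b : ℕ → 𝕜) (z : A) (p : ℕ) : A :=
  jacobiSol a b z 1 0 p + jacobiSol a b z 0 1 (p + 1)

lemma isJacobiSolution_jacobiSol (ha : ∀ n, a n ≠ 0) (x y : A) :
    IsJacobiSolution a b z (jacobiSol a b z x y) := fun n => by
  rw [jacobiSol, smul_inv_smul₀ (ha _), smul_eq_mul]
  abel

lemma map_jacobiSol {B : Type*} [CommRing B] [Algebra 𝕜 B] (f : A →ₐ[𝕜] B) (x y : A) (n : ℕ) :
    f (jacobiSol a b z x y n) = jacobiSol a b (f z) (f x) (f y) n := by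
  induction n using Nat.twoStepInduction with
  | zero => rfl
  | one => rfl
  | more n ih₀ ih₁ => simp only [jacobiSol, map_smul, map_sub, map_mul, ih₀, ih₁]

lemma map_discriminant {B : Type*} [CommRing B] [Algebra 𝕜 B] (f : A →ₐ[𝕜] B) :
    f (discriminant a b z p) = discriminant a b (f z) p := by
  simp only [discriminant, map_add, map_jacobiSol, map_zero, map_one]

namespace IsJacobiSolution

variable {u : ℕ → V}

lemma const_smul (hu : IsJacobiSolution a b z u) (c : A) : IsJacobiSolution a b z (c • u) :=
  fun n => by
    simp only [Pi.smul_apply, smul_comm z c, ← hu n, smul_add, smul_comm c (_ : 𝕜)]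

lemma smul_const {w : ℕ → A} (hw : IsJacobiSolution a b z w) (x : V) :
    IsJacobiSolution a b z (fun n => w n • x) := fun n => by
  simp only [← smul_assoc, ← add_smul, hw n]

lemma eq_jacobiSol_smul_add (ha : ∀ n, a n ≠ 0) (hu : IsJacobiSolution a b z u) (n : ℕ) :
    u n = jacobiSol a b z 1 0 n • u 0 + jacobiSol a b z 0 1 n • u 1 := by
  refine congrFun (hu.ext ha (((isJacobiSolution_jacobiSol ha 1 0).smul_const (u 0)).add
    ((isJacobiSolution_jacobiSol ha 0 1).smul_const (u 1))) ?_ ?_) n <;>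
  simp [jacobiSol]

lemma sum_smul_jacobi_sub_eq {v : ℕ → A} (hv : IsJacobiSolution a b z v) (u : ℕ → V) (n : ℕ) :
    ∑ k ∈ Finset.range n, v (k + 1) •
        (a k • u k + a (k + 1) • u (k + 2) + b (k + 1) • u (k + 1) - z • u (k + 1)) =
      a n • (v n • u (n + 1) - v (n + 1) • u n) - a 0 • (v 0 • u 1 - v 1 • u 0) := by
  induction n with
  | zero => simp
  | succ n ih =>
    rw [Finset.sum_range_succ, ih]
    have hvn := hv n
    simp only [Algebra.smul_def] at hvn
    linear_combination (norm := module) hvn • u (n + 1)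

lemma wronskian_eq {u v : ℕ → A} (hu : IsJacobiSolution a b z u)
    (hv : IsJacobiSolution a b z v) (n : ℕ) :
    a n • (u n * v (n + 1) - u (n + 1) * v n) = a 0 • (u 0 * v 1 - u 1 * v 0) := by
  have h := hu.sum_smul_jacobi_sub_eq v n
  rw [Finset.sum_eq_zero fun k _ => by rw [hv k, sub_self, smul_zero]] at h
  exact sub_eq_zero.mp h.symm

end IsJacobiSolution

lemma det_monodromy_eq_one (ha : ∀ n, a n ≠ 0) (hap : Function.Periodic a p) :
    jacobiSol a b z 1 0 p * jacobiSol a b z 0 1 (p + 1) -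
      jacobiSol a b z 1 0 (p + 1) * jacobiSol a b z 0 1 p = 1 := by
  have hw := (isJacobiSolution_jacobiSol (b := b) (z := z) ha 1 0).wronskian_eq
    (isJacobiSolution_jacobiSol ha 0 1) p
  rw [← zero_add p, hap 0, zero_add] at hw
  simpa [jacobiSol] using smul_right_injective A (ha 0) hw

/-- This is the Cayley–Hamilton theorem for the monodromy matrix, whose determinant is one. -/
lemma IsJacobiSolution.add_eq_discriminant_smul {u : ℕ → V} (hu : IsJacobiSolution a b z u)
    (ha : ∀ n, a n ≠ 0) (hap : Function.Periodic a p) (hbp : Function.Periodic b p) (n : ℕ) :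
    u (n + p + p) + u n = discriminant a b z p • u (n + p) := by
  have hshift := hu.shift hap hbp
  have hdet := det_monodromy_eq_one (b := b) (z := z) ha hap
  have h₀ := hu.eq_jacobiSol_smul_add ha p
  have h₁ := hu.eq_jacobiSol_smul_add ha (p + 1)
  have h₀' := hshift.eq_jacobiSol_smul_add ha p
  have h₁' := hshift.eq_jacobiSol_smul_add ha (p + 1)
  simp only [zero_add, add_comm 1 p] at h₀' h₁'
  refine congrFun (((hshift.shift hap hbp).add hu).ext ha
    (hshift.const_smul (discriminant a b z p)) ?_ ?_) n <;>
  simp only [Pi.add_apply, Pi.smul_apply, zero_add, add_comm 1 p, discriminant]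
  · rw [h₀', h₁, h₀]
    linear_combination (norm := module) -(hdet • u 0)
  · rw [h₁', h₁, h₀]
    linear_combination (norm := module) -(hdet • u 1)

end JacobiRecurrence

section DiscriminantPolynomial

open Polynomial

lemma natDegree_jacobiSol_le {𝕜 : Type*} [Field 𝕜] (a b : ℕ → 𝕜) (x y : 𝕜) (n : ℕ) :
    (jacobiSol a b (X : 𝕜[X]) (C x) (C y) n).natDegree ≤ n - 1 := by
  induction n using Nat.twoStepInduction with
  | zero => simp [jacobiSol]
  | one => simp [jacobiSol]
  | more n ih₀ ih₁ =>
    refine (natDegree_smul_le _ _).trans ((natDegree_sub_le _ _).trans (max_le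
      ((natDegree_sub_le _ _).trans (max_le ?_ ?_)) ?_))
    · exact natDegree_mul_le.trans (by rw [natDegree_X]; omega)
    · exact (natDegree_smul_le _ _).trans (by omega)
    · exact (natDegree_smul_le _ _).trans (by omega)

lemma natDegree_discriminant_le {𝕜 : Type*} [Field 𝕜] (a b : ℕ → 𝕜) (p : ℕ) :
    (discriminant a b (X : 𝕜[X]) p).natDegree ≤ p := by
  have h₁ := natDegree_jacobiSol_le a b 1 0 p
  have h₂ := natDegree_jacobiSol_le a b 0 1 (p + 1)
  rw [C_0, C_1] at h₁ h₂
  exact natDegree_add_le_of_degree_le (h₁.trans (Nat.sub_le _ _)) h₂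

section Bounds

variable {a b : ℕ → ℝ} {g M R D : ℝ} (hg : 0 < g) (hag : ∀ n, g ≤ |a n|) (haM : ∀ n, |a n| ≤ M)
  (hbM : ∀ n, |b n| ≤ M) (hD : 1 ≤ D) (hDg : 1 + R + 2 * M ≤ g * D)
include hg hag haM hbM hD hDg

lemma abs_jacobi_step_le {x w u v : ℝ} {n : ℕ} (hx : |x| ≤ R) (hw : |w| ≤ D ^ (n + 1))
    (hu : |u| ≤ D ^ n) (hv : |v| ≤ D ^ (n + 1)) :
    |(a (n + 1))⁻¹ * (w + x * v - b (n + 1) * v - a n * u)| ≤ D ^ (n + 2) := by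
  have hmono : D ^ n ≤ D ^ (n + 1) := pow_le_pow_right₀ hD n.le_succ
  have hM : 0 ≤ M := (abs_nonneg _).trans (haM 0)
  have hR : 0 ≤ R := (abs_nonneg _).trans hx
  have hsum : |w + x * v - b (n + 1) * v - a n * u| ≤ g * D ^ (n + 2) := by
    calc |w + x * v - b (n + 1) * v - a n * u|
        ≤ |w| + |x| * |v| + |b (n + 1)| * |v| + |a n| * |u| := by
          rw [← abs_mul, ← abs_mul, ← abs_mul]
          grind [abs_sub, abs_add_le]
      _ ≤ D ^ (n + 1) + R * D ^ (n + 1) + M * D ^ (n + 1) + M * D ^ (n + 1) := by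
          gcongr
          exacts [hbM _, haM _, hu.trans hmono]
      _ = (1 + R + 2 * M) * D ^ (n + 1) := by ring
      _ ≤ g * D * D ^ (n + 1) := by gcongr
      _ = g * D ^ (n + 2) := by ring
  have ha : 0 < |a (n + 1)| := hg.trans_le (hag _)
  rw [abs_mul, abs_inv, inv_mul_le_iff₀ ha]
  exact hsum.trans (by gcongr; exact hag _)

lemma abs_eval_jacobiSol_le {x y₀ y₁ : ℝ} (hx : |x| ≤ R) (hy₀ : |y₀| ≤ 1) (hy₁ : |y₁| ≤ 1)
    (n : ℕ) :
    |(jacobiSol a b X (C y₀) (C y₁) n).eval x| ≤ D ^ n ∧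
      |(derivative (jacobiSol a b X (C y₀) (C y₁) n)).eval x| ≤ D ^ n := by
  have hD₀ : 0 ≤ D := zero_le_one.trans hD
  induction n using Nat.twoStepInduction with
  | zero => simpa [jacobiSol] using hy₀
  | one => simpa [jacobiSol, hD₀] using hy₁.trans hD
  | more n ih₀ ih₁ =>
    have hstep {w u v : ℝ} := abs_jacobi_step_le hg hag haM hbM hD hDg (w := w) (u := u) (v := v)
      (n := n) hx
    constructor
    · have h := hstep (w := 0) (by simpa using pow_nonneg hD₀ _) ih₀.1 ih₁.1
      simpa [jacobiSol] using h
    · have h := hstep ih₁.1 ih₀.2 ih₁.2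
      simpa [jacobiSol, derivative_smul] using h

lemma abs_derivative_discriminant_eval_le {x : ℝ} (hx : |x| ≤ R) (p : ℕ) :
    |(derivative (discriminant a b X p)).eval x| ≤ 2 * D ^ (p + 1) := by
  have hbound {y₀ y₁ : ℝ} (hy₀ : |y₀| ≤ 1) (hy₁ : |y₁| ≤ 1) (n : ℕ) :=
    (abs_eval_jacobiSol_le hg hag haM hbM hD hDg hx hy₀ hy₁ n).2
  have h₁ := hbound abs_one.le (by simp : |(0 : ℝ)| ≤ 1) p
  have h₂ := hbound (by simp : |(0 : ℝ)| ≤ 1) abs_one.le (p + 1)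
  rw [C_0, C_1] at h₁ h₂
  have hmono : D ^ p ≤ D ^ (p + 1) := pow_le_pow_right₀ hD p.le_succ
  rw [discriminant, derivative_add, eval_add]
  exact (abs_add_le _ _).trans (by linarith)

end Bounds

end DiscriminantPolynomial

section WeightedShift

open scoped lp

variable {ι : Type*} {e : ι ≃ ι} {w : ι → ℂ} {C : ℝ}

lemma norm_sq_eq_tsum (φ : ℓ²(ι, ℂ)) : ‖φ‖ ^ 2 = ∑' n, ‖φ n‖ ^ 2 := by
  simpa using lp.norm_rpow_eq_tsum (p := 2) (by norm_num) φ

lemma summable_norm_sq (φ : ℓ²(ι, ℂ)) : Summable fun n => ‖φ n‖ ^ 2 := by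
  simpa using (lp.memℓp φ).summable (by norm_num)

lemma norm_sq_mul_le (hw : ∀ n, ‖w n‖ ≤ C) (φ : ℓ²(ι, ℂ)) (n : ι) :
    ‖w n * φ (e n)‖ ^ 2 ≤ C ^ 2 * ‖φ (e n)‖ ^ 2 := by
  rw [norm_mul, mul_pow]
  gcongr
  exact hw n

lemma summable_norm_sq_mul (hw : ∀ n, ‖w n‖ ≤ C) (φ : ℓ²(ι, ℂ)) :
    Summable fun n => ‖w n * φ (e n)‖ ^ 2 :=
  .of_nonneg_of_le (fun n => by positivity) (norm_sq_mul_le hw φ)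
    ((e.summable_iff.mpr (summable_norm_sq φ)).mul_left _)

lemma exists_weightedShift (e : ι ≃ ι) (hC : 0 ≤ C) (hw : ∀ n, ‖w n‖ ≤ C) :
    ∃ T : ℓ²(ι, ℂ) →L[ℂ] ℓ²(ι, ℂ),
      (∀ φ n, T φ n = w n * φ (e n)) ∧ ‖T‖ ≤ C := by
  let T : ℓ²(ι, ℂ) →ₗ[ℂ] ℓ²(ι, ℂ) :=
    { toFun φ := ⟨fun n => w n * φ (e n), memℓp_gen (by simpa using summable_norm_sq_mul hw φ)⟩
      map_add' φ ψ := by ext n; exact mul_add _ _ _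
      map_smul' c φ := by ext n; exact mul_left_comm _ _ _ }
  have hT (φ : ℓ²(ι, ℂ)) : ‖T φ‖ ≤ C * ‖φ‖ := by
    refine le_of_sq_le_sq ?_ (by positivity)
    rw [norm_sq_eq_tsum, mul_pow, norm_sq_eq_tsum φ, ← e.tsum_eq fun n => ‖φ n‖ ^ 2,
      ← tsum_mul_left]
    exact (summable_norm_sq_mul hw φ).tsum_le_tsum (norm_sq_mul_le hw φ)
      ((e.summable_iff.mpr (summable_norm_sq φ)).mul_left _)
  exact ⟨T.mkContinuous C hT, fun _ _ => rfl, T.mkContinuous_norm_le hC hT⟩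

end WeightedShift

section JacobiOperator

open Polynomial
open scoped InnerProductSpace lp

/-- The standard basis vector of `ℓ²(ℤ)` at the site `n`. -/
noncomputable def siteVec (n : ℤ) : ℓ²(ℤ, ℂ) := lp.single 2 n 1

lemma siteVec_apply (n k : ℤ) : siteVec n k = if k = n then 1 else 0 := by
  rw [siteVec, lp.single_apply, Pi.single_apply]

lemma inner_siteVec (n : ℤ) (φ : ℓ²(ℤ, ℂ)) : ⟪siteVec n, φ⟫_ℂ = φ n := by
  simp [siteVec, lp.inner_single_left]

lemma ext_siteVec {S T : ℓ²(ℤ, ℂ) →L[ℂ] ℓ²(ℤ, ℂ)} (h : ∀ n, S (siteVec n) = T (siteVec n)) :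
    S = T :=
  lp.ext_continuousLinearMap ENNReal.ofNat_ne_top fun n =>
    ContinuousLinearMap.ext_ring (h n)

/-- `J` acts on `ℓ²(ℤ)` as the Jacobi matrix with off-diagonal entries `a` and diagonal
entries `b`, where `a n` couples the sites `n` and `n + 1`. -/
def IsJacobiOperator (a b : ℤ → ℝ) (J : ℓ²(ℤ, ℂ) →L[ℂ] ℓ²(ℤ, ℂ)) : Prop :=
  ∀ (φ : ℓ²(ℤ, ℂ)) (n : ℤ),
    (J φ) n = (a (n - 1) : ℂ) * φ (n - 1) + (a n : ℂ) * φ (n + 1) + (b n : ℂ) * φ n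

lemma exists_isJacobiOperator_norm_le {a b : ℤ → ℝ} {M : ℝ} (ha : ∀ n, |a n| ≤ M)
    (hb : ∀ n, |b n| ≤ M) : ∃ J, IsJacobiOperator a b J ∧ ‖J‖ ≤ 3 * M := by
  have hM : 0 ≤ M := (abs_nonneg _).trans (ha 0)
  have hnorm {c : ℤ → ℝ} (hc : ∀ n, |c n| ≤ M) (n : ℤ) : ‖(c n : ℂ)‖ ≤ M := by
    simpa using hc n
  obtain ⟨L, hL, hLM⟩ := exists_weightedShift (Equiv.subRight 1) hM fun n => hnorm ha (n - 1)
  obtain ⟨R, hR, hRM⟩ := exists_weightedShift (Equiv.addRight 1) hM (hnorm ha)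
  obtain ⟨B, hB, hBM⟩ := exists_weightedShift (Equiv.refl ℤ) hM (hnorm hb)
  refine ⟨L + R + B, fun φ n => ?_, norm_add₃_le.trans (by linarith)⟩
  exact congrArg₂ (· + ·) (congrArg₂ (· + ·) (hL φ n) (hR φ n)) (hB φ n)

namespace IsJacobiOperator

variable {a b a' b' : ℤ → ℝ} {J K : ℓ²(ℤ, ℂ) →L[ℂ] ℓ²(ℤ, ℂ)}

lemma unique (hJ : IsJacobiOperator a b J) (hK : IsJacobiOperator a b K) : J = K := by
  ext φ n
  rw [hJ φ n, hK φ n]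

lemma sub (hJ : IsJacobiOperator a b J) (hK : IsJacobiOperator a' b' K) :
    IsJacobiOperator (a - a') (b - b') (J - K) := fun φ n => by
  refine (congrArg₂ (· - ·) (hJ φ n) (hK φ n)).trans ?_
  push_cast [Pi.sub_apply]
  ring

lemma norm_le (hJ : IsJacobiOperator a b J) {M : ℝ} (ha : ∀ n, |a n| ≤ M)
    (hb : ∀ n, |b n| ≤ M) : ‖J‖ ≤ 3 * M := by
  obtain ⟨K, hK, hKM⟩ := exists_isJacobiOperator_norm_le ha hb
  rwa [hJ.unique hK]

lemma apply_siteVec (hJ : IsJacobiOperator a b J) (n : ℤ) :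
    J (siteVec n) = a (n - 1) • siteVec (n - 1) + a n • siteVec (n + 1) + b n • siteVec n := by
  ext k
  rw [hJ]
  change _ = a (n - 1) • siteVec (n - 1) k + a n • siteVec (n + 1) k + b n • siteVec n k
  simp only [siteVec_apply, Complex.real_smul]
  grind

lemma isSelfAdjoint (hJ : IsJacobiOperator a b J) : IsSelfAdjoint J := by
  refine IsJacobiOperator.unique (fun φ n => ?_) hJ
  rw [ContinuousLinearMap.star_eq_adjoint, ← inner_siteVec n,
    ContinuousLinearMap.adjoint_inner_right, hJ.apply_siteVec]
  simp only [inner_add_left, RCLike.real_smul_eq_coe_smul (K := ℂ), inner_smul_left, inner_siteVec,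
    Complex.conj_ofReal, Complex.coe_algebraMap]

end IsJacobiOperator

instance : Nontrivial ℓ²(ℤ, ℂ) :=
  ⟨siteVec 0, 0, fun h => one_ne_zero (α := ℂ) <| by
    simpa [siteVec_apply] using congrArg (fun φ : ℓ²(ℤ, ℂ) => φ 0) h⟩

instance : IsScalarTower ℝ (ℓ²(ℤ, ℂ) →L[ℂ] ℓ²(ℤ, ℂ)) ℓ²(ℤ, ℂ) := ⟨fun _ _ _ => rfl⟩

/-- `K` is the Jacobi operator with `p`-periodic entries `a`, `b`, where `a` never vanishes. -/
structure IsPeriodicJacobiOperator (a b : ℤ → ℝ) (p : ℕ) (K : ℓ²(ℤ, ℂ) →L[ℂ] ℓ²(ℤ, ℂ)) : Prop where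
  isJacobiOperator : IsJacobiOperator a b K
  ne_zero (n : ℤ) : a n ≠ 0
  period_pos : 0 < p
  periodic_offDiag : Function.Periodic a p
  periodic_diag : Function.Periodic b p

/-- The discriminant of two-sided `p`-periodic Jacobi data, as a polynomial in the spectral
parameter. -/
noncomputable def discriminantPoly (a b : ℤ → ℝ) (p : ℕ) : ℝ[X] :=
  discriminant (fun n : ℕ => a n) (fun n : ℕ => b n) X p

namespace IsPeriodicJacobiOperator

variable {a b : ℤ → ℝ} {p : ℕ} {K : ℓ²(ℤ, ℂ) →L[ℂ] ℓ²(ℤ, ℂ)} (h : IsPeriodicJacobiOperator a b p K)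
include h

lemma periodic_nat_offDiag : Function.Periodic (fun n : ℕ => a n) p := fun n => by
  simpa using h.periodic_offDiag n

lemma periodic_nat_diag : Function.Periodic (fun n : ℕ => b n) p := fun n => by
  simpa using h.periodic_diag n

lemma isJacobiSolution_siteVec (q : ℤ) :
    IsJacobiSolution (fun n : ℕ => a n) (fun n : ℕ => b n) (X : ℝ[X])
      (fun n : ℕ => Module.AEval.of ℝ ℓ²(ℤ, ℂ) K (siteVec (n + q * p))) := fun n => by
  have ha : Function.Periodic a (q * p) := h.periodic_offDiag.int_mul q
  have hb : Function.Periodic b (q * p) := h.periodic_diag.int_mul q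
  have hK := h.isJacobiOperator.apply_siteVec (n + 1 + q * p)
  rw [add_sub_right_comm _ _ (1 : ℤ), add_sub_cancel_right, add_right_comm _ _ (1 : ℤ), ha, ha, hb]
    at hK
  rw [Module.AEval.X_smul_of, ContinuousLinearMap.smul_def, Nat.cast_succ, hK]
  simp only [map_add, map_smul, Nat.cast_succ, add_assoc, one_add_one_eq_two]

lemma aeval_discriminantPoly_siteVec (k : ℤ) :
    aeval K (discriminantPoly a b p) (siteVec k) = siteVec (k + p) + siteVec (k - p) := by
  obtain ⟨q, r, rfl⟩ : ∃ (q : ℤ) (r : ℕ), k = r + q * p + p := by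
    have hp : (p : ℤ) ≠ 0 := mod_cast h.period_pos.ne'
    obtain ⟨r, hr⟩ := Int.eq_ofNat_of_zero_le (Int.emod_nonneg (k - p) hp)
    exact ⟨(k - p) / p, r, by rw [← hr, Int.emod_add_ediv_mul, sub_add_cancel]⟩
  have hrec := (h.isJacobiSolution_siteVec q).add_eq_discriminant_smul
    (fun n => h.ne_zero n) h.periodic_nat_offDiag h.periodic_nat_diag r
  refine (Module.AEval.of ℝ ℓ²(ℤ, ℂ) K).injective ?_
  rw [map_add, ← ContinuousLinearMap.smul_def, Module.AEval.of_aeval_smul, discriminantPoly,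
    add_sub_cancel_right]
  simpa only [Nat.cast_add, add_right_comm _ (p : ℤ) (q * p)] using hrec.symm

lemma norm_aeval_discriminantPoly_le : ‖aeval K (discriminantPoly a b p)‖ ≤ 2 := by
  obtain ⟨L, hL, hL₁⟩ := exists_weightedShift (Equiv.addRight (p : ℤ)) (w := 1) zero_le_one
    (by simp)
  obtain ⟨R, hR, hR₁⟩ := exists_weightedShift (Equiv.subRight (p : ℤ)) (w := 1) zero_le_one
    (by simp)
  have hsum : aeval K (discriminantPoly a b p) = L + R := by
    refine ext_siteVec fun k => ?_
    ext n
    rw [h.aeval_discriminantPoly_siteVec]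
    change siteVec (k + p) n + siteVec (k - p) n = L (siteVec k) n + R (siteVec k) n
    simp only [hL, hR, siteVec_apply, Pi.one_apply, one_mul, Equiv.coe_addRight,
      Equiv.subRight_apply, add_comm (ite (n = k + p) _ _)]
    simp only [sub_eq_iff_eq_add, ← eq_sub_iff_add_eq]
  exact hsum ▸ (norm_add_le _ _).trans (by linarith)

lemma abs_eval_discriminantPoly_le {x : ℝ} (hx : x ∈ spectrum ℝ K) :
    |(discriminantPoly a b p).eval x| ≤ 2 :=
  (abs_eval_le_norm_aeval _ hx).trans h.norm_aeval_discriminantPoly_le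

end IsPeriodicJacobiOperator

lemma exists_norm_eq_one_mul_self_add_one_eq {c : ℝ} (hc : |c| ≤ 2) :
    ∃ l : ℂ, ‖l‖ = 1 ∧ l * l + 1 = c * l := by
  obtain ⟨hc₁, hc₂⟩ := abs_le.mp hc
  refine ⟨Complex.exp (Real.arccos (c / 2) * Complex.I), Complex.norm_exp_ofReal_mul_I _, ?_⟩
  have hcos := Complex.two_cos (Real.arccos (c / 2))
  rw [← Complex.ofReal_cos, Real.cos_arccos (by linarith) (by linarith)] at hcos
  have hinv : Complex.exp (-Real.arccos (c / 2) * Complex.I) *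
      Complex.exp (Real.arccos (c / 2) * Complex.I) = 1 := by
    rw [← Complex.exp_add, neg_mul, neg_add_cancel, Complex.exp_zero]
  push_cast at hcos
  linear_combination -Complex.exp (Real.arccos (c / 2) * Complex.I) * hcos - hinv

lemma exists_blochSolution {a b : ℕ → ℝ} {p : ℕ} (ha : ∀ n, a n ≠ 0)
    (hap : Function.Periodic a p) (hbp : Function.Periodic b p) {z : ℂ} {c : ℝ} (hc : |c| ≤ 2)
    (hz : discriminant a b z p = c) :
    ∃ v : ℕ → ℂ, IsJacobiSolution a b z v ∧ v ≠ 0 ∧ ∀ n, ‖v (n + p)‖ = ‖v n‖ := by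
  obtain ⟨l, hl, hlc⟩ := exists_norm_eq_one_mul_self_add_one_eq hc
  have hu : IsJacobiSolution a b z (jacobiSol a b z 0 1) := isJacobiSolution_jacobiSol ha 0 1
  set u := jacobiSol a b z 0 1
  by_cases hmul : (fun n => u (n + p)) + (-l) • u = 0
  · refine ⟨u, hu, fun h0 => one_ne_zero (α := ℂ) (congrFun h0 1), fun n => ?_⟩
    have hn : u (n + p) = l * u n := by simpa [add_neg_eq_zero] using congrFun hmul n
    rw [hn, norm_mul, hl, one_mul]
  · refine ⟨_, (hu.shift hap hbp).add (hu.const_smul (-l)), hmul, fun n => ?_⟩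
    have hrec : u (n + p + p) + u n = c * u (n + p) := by
      simpa only [hz, smul_eq_mul] using hu.add_eq_discriminant_smul ha hap hbp n
    have hn : u (n + p) - l * u n = l * (u (n + p + p) - l * u (n + p)) := by
      linear_combination -l * hrec + u (n + p) * hlc
    simp only [Pi.add_apply, Pi.smul_apply, smul_eq_mul, neg_mul, ← sub_eq_add_neg]
    rw [hn, norm_mul, hl, one_mul]

lemma sum_range_mul_of_periodic {f : ℕ → ℝ} {p : ℕ} (hf : Function.Periodic f p) (j : ℕ) :
    ∑ k ∈ Finset.range (j * p), f k = j * ∑ k ∈ Finset.range p, f k := by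
  induction j with
  | zero => simp
  | succ j ih =>
    rw [add_one_mul, Finset.sum_range_add, ih, Nat.cast_succ, add_one_mul]
    congr 1
    exact Finset.sum_congr rfl fun k _ => by rw [add_comm]; exact hf.nat_mul j k

lemma norm_sum_smul_sq_of_orthonormal {𝕜 E ι : Type*} [RCLike 𝕜] [NormedAddCommGroup E]
    [InnerProductSpace 𝕜 E] {e : ι → E} (he : Orthonormal 𝕜 e) (c : ι → 𝕜) (s : Finset ι) :
    ‖∑ i ∈ s, c i • e i‖ ^ 2 = ∑ i ∈ s, ‖c i‖ ^ 2 := by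
  have h := he.inner_sum c c s
  simp only [inner_self_eq_norm_sq_to_K, RCLike.conj_mul] at h
  exact_mod_cast h

lemma orthonormal_siteVec : Orthonormal ℂ siteVec :=
  orthonormal_iff_ite.mpr fun m n => by rw [inner_siteVec, siteVec_apply]

lemma exists_norm_le_mul_norm_sub {E : Type*} [NormedAddCommGroup E] [NormedSpace ℂ E]
    {K : E →L[ℂ] E} {z : ℂ} (hz : z ∉ spectrum ℂ K) :
    ∃ C, 0 ≤ C ∧ ∀ φ, ‖φ‖ ≤ C * ‖K φ - z • φ‖ := by
  obtain ⟨u, hu⟩ := spectrum.notMem_iff.mp hz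
  refine ⟨‖(↑u⁻¹ : E →L[ℂ] E)‖, norm_nonneg _, fun φ => ?_⟩
  have h : (↑u⁻¹ : E →L[ℂ] E) (z • φ - K φ) = φ := by
    have := DFunLike.congr_fun u.inv_mul φ
    rw [hu] at this
    exact this
  rw [norm_sub_rev]
  calc ‖φ‖ = ‖(↑u⁻¹ : E →L[ℂ] E) (z • φ - K φ)‖ := by rw [h]
    _ ≤ _ := ContinuousLinearMap.le_opNorm _ _

lemma norm_smul_smul_sub_smul_le {E : Type*} [NormedAddCommGroup E] [NormedSpace ℂ E] (r : ℝ)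
    (c d : ℂ) {x y : E} (hx : ‖x‖ = 1) (hy : ‖y‖ = 1) :
    ‖r • (c • x - d • y)‖ ≤ |r| * (‖c‖ + ‖d‖) := by
  rw [norm_smul, Real.norm_eq_abs]
  gcongr
  exact (norm_sub_le _ _).trans_eq (by rw [norm_smul, norm_smul, hx, hy, mul_one, mul_one])

section BlochSpectrum

variable {a b : ℤ → ℝ} {p : ℕ} {K : ℓ²(ℤ, ℂ) →L[ℂ] ℓ²(ℤ, ℂ)} {z : ℂ} {v : ℕ → ℂ}

lemma IsJacobiOperator.norm_apply_sum_sub_smul_le (hK : IsJacobiOperator a b K)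
    (hv : IsJacobiSolution (fun n : ℕ => a n) (fun n : ℕ => b n) z v) (n : ℕ) :
    ‖K (∑ k ∈ Finset.range n, v (k + 1) • siteVec (k + 1 : ℕ)) -
        z • ∑ k ∈ Finset.range n, v (k + 1) • siteVec (k + 1 : ℕ)‖ ≤
      |a n| * (‖v n‖ + ‖v (n + 1)‖) + |a 0| * (‖v 0‖ + ‖v 1‖) := by
  have hboundary := hv.sum_smul_jacobi_sub_eq (fun k : ℕ => siteVec k) n
  have hK' (k : ℕ) : K (siteVec (k + 1 : ℕ)) = a k • siteVec k +
      a (k + 1 : ℕ) • siteVec (k + 2 : ℕ) + b (k + 1 : ℕ) • siteVec (k + 1 : ℕ) := by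
    rw [hK.apply_siteVec]
    push_cast
    rw [add_sub_cancel_right, add_assoc (k : ℤ), one_add_one_eq_two]
  rw [map_sum, Finset.smul_sum, ← Finset.sum_sub_distrib]
  simp only [map_smul, hK', smul_comm z, ← smul_sub]
  rw [hboundary]
  have hnorm (k : ℤ) : ‖siteVec k‖ = 1 := orthonormal_siteVec.norm_eq_one k
  exact (norm_sub_le _ _).trans (add_le_add (norm_smul_smul_sub_smul_le _ _ _ (hnorm _) (hnorm _))
    (norm_smul_smul_sub_smul_le _ _ _ (hnorm _) (hnorm _)))

lemma eq_zero_of_sum_range_mul_le {f : ℕ → ℝ} (hf₀ : ∀ n, 0 ≤ f n) (hp : 0 < p)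
    (hf : Function.Periodic f p) {C : ℝ} (hC : ∀ j, ∑ k ∈ Finset.range (j * p), f k ≤ C) (n : ℕ) :
    f n = 0 := by
  have hsum : ∑ k ∈ Finset.range p, f k ≤ 0 := by
    by_contra! hpos
    obtain ⟨j, hj⟩ := exists_nat_gt (C / ∑ k ∈ Finset.range p, f k)
    rw [div_lt_iff₀ hpos, ← sum_range_mul_of_periodic hf] at hj
    exact hj.not_ge (hC j)
  rw [← hf.map_mod_nat]
  exact (Finset.sum_eq_zero_iff_of_nonneg fun k _ => hf₀ k).mp
    (hsum.antisymm (Finset.sum_nonneg fun k _ => hf₀ k)) _ (Finset.mem_range.mpr (n.mod_lt hp))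

namespace IsPeriodicJacobiOperator

variable (h : IsPeriodicJacobiOperator a b p K)
include h

lemma mem_spectrum_of_norm_periodic
    (hv : IsJacobiSolution (fun n : ℕ => a n) (fun n : ℕ => b n) z v) (hv₀ : v ≠ 0)
    (hvp : ∀ n, ‖v (n + p)‖ = ‖v n‖) : z ∈ spectrum ℂ K := by
  by_contra hz
  obtain ⟨C, hC₀, hC⟩ := exists_norm_le_mul_norm_sub hz
  have hvp' : Function.Periodic (fun n => ‖v n‖) p := hvp
  have hend (j : ℕ) : |a (j * p : ℕ)| * (‖v (j * p)‖ + ‖v (j * p + 1)‖) =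
      |a 0| * (‖v 0‖ + ‖v 1‖) := by
    rw [show a (j * p : ℕ) = a 0 from mod_cast (h.periodic_nat_offDiag.nat_mul j).eq,
      show ‖v (j * p)‖ = ‖v 0‖ from (hvp'.nat_mul j).eq, add_comm (j * p) 1,
      show ‖v (1 + j * p)‖ = ‖v 1‖ from hvp'.nat_mul j 1]
  have hsum (j : ℕ) : ∑ k ∈ Finset.range (j * p), ‖v (k + 1)‖ ^ 2 ≤
      (C * (|a 0| * (‖v 0‖ + ‖v 1‖) + |a 0| * (‖v 0‖ + ‖v 1‖))) ^ 2 := by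
    have hinj : Function.Injective fun k : ℕ => ((k + 1 : ℕ) : ℤ) :=
      Nat.cast_injective.comp (add_left_injective 1)
    rw [← norm_sum_smul_sq_of_orthonormal (orthonormal_siteVec.comp _ hinj)]
    have hres := h.isJacobiOperator.norm_apply_sum_sub_smul_le hv (j * p)
    rw [hend] at hres
    exact pow_le_pow_left₀ (norm_nonneg _) ((hC _).trans (mul_le_mul_of_nonneg_left hres hC₀)) 2
  have hzero (n : ℕ) : v (n + 1) = 0 := by
    have hn := eq_zero_of_sum_range_mul_le (fun n => sq_nonneg ‖v (n + 1)‖) h.period_pos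
      (fun n => by simp only [add_right_comm n p, hvp]) hsum n
    simpa using hn
  refine hv₀ (funext fun n => ?_)
  have hnp := hzero (n + p - 1)
  rw [Nat.sub_add_cancel (h.period_pos.trans_le (Nat.le_add_left _ _))] at hnp
  rw [Pi.zero_apply, ← norm_eq_zero, ← hvp, hnp, norm_zero]

lemma mem_spectrum_of_discriminant_eq {c : ℝ} (hc : |c| ≤ 2)
    (hz : aeval z (discriminantPoly a b p) = (c : ℂ)) : z ∈ spectrum ℂ K := by
  rw [discriminantPoly, map_discriminant, aeval_X] at hz
  obtain ⟨v, hv, hv₀, hvp⟩ := exists_blochSolution (fun n : ℕ => h.ne_zero n)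
    h.periodic_nat_offDiag h.periodic_nat_diag hc hz
  exact h.mem_spectrum_of_norm_periodic hv hv₀ hvp

lemma splits_discriminantPoly_sub_C {c : ℝ} (hc : |c| ≤ 2) :
    (discriminantPoly a b p - C c).Splits := by
  refine splits_of_forall_complex_root_im_eq_zero fun z hz => ?_
  refine h.isJacobiOperator.isSelfAdjoint.im_eq_zero_of_mem_spectrum
    (h.mem_spectrum_of_discriminant_eq hc ?_)
  rw [Polynomial.map_sub, map_C, IsRoot, eval_sub, eval_C, sub_eq_zero, eval_map] at hz
  exact hz

lemma mem_spectrum_iff {x : ℝ} :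
    x ∈ spectrum ℝ K ↔ |(discriminantPoly a b p).eval x| ≤ 2 := by
  refine ⟨h.abs_eval_discriminantPoly_le, fun hx => ?_⟩
  rw [← spectrum.algebraMap_mem_iff ℂ]
  exact h.mem_spectrum_of_discriminant_eq hx (aeval_algebraMap_apply ℂ x _)

lemma spectrum_eq : spectrum ℝ K = {x | |(discriminantPoly a b p).eval x| ≤ 2} :=
  Set.ext fun _ => h.mem_spectrum_iff

lemma degree_discriminantPoly_pos : 0 < (discriminantPoly a b p).degree := by
  by_contra! hdeg
  obtain ⟨x, hx⟩ := spectrum_real_nonempty h.isJacobiOperator.isSelfAdjoint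
  have hmem : ‖K‖ + 1 ∈ spectrum ℝ K := by
    refine h.mem_spectrum_iff.mpr (le_of_eq_of_le ?_ (h.abs_eval_discriminantPoly_le hx))
    rw [eq_C_of_degree_le_zero hdeg, eval_C, eval_C]
  have hle := (le_abs_self _).trans (spectrum.norm_le_norm_of_mem hmem)
  linarith

lemma volume_sdiff_spectrum_le {U : Set ℝ} {d : ℝ} (hd : 0 ≤ d)
    (hU : ∀ x ∈ U, ∃ y ∈ spectrum ℝ K, dist x y ≤ d) :
    volume (U \ spectrum ℝ K) ≤ ENNReal.ofReal (4 * p * d) := by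
  rw [h.spectrum_eq] at hU ⊢
  refine (volume_sdiff_abs_eval_le h.degree_discriminantPoly_pos hd hU).trans ?_
  have hdeg : (discriminantPoly a b p).natDegree ≤ p := natDegree_discriminant_le _ _ p
  gcongr

lemma exists_Icc_subset_spectrum {g M D : ℝ} (hg : 0 < g) (hag : ∀ n, g ≤ |a n|)
    (haM : ∀ n, |a n| ≤ M) (hbM : ∀ n, |b n| ≤ M) (hD : 1 ≤ D) (hDg : 1 + 5 * M ≤ g * D)
    {x : ℝ} (hx : x ∈ spectrum ℝ K) :
    ∃ u v, x ∈ Set.Icc u v ∧ Set.Icc u v ⊆ spectrum ℝ K ∧ 2 * D⁻¹ ^ (p + 1) ≤ v - u := by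
  have hK : ‖K‖ ≤ 3 * M := h.isJacobiOperator.norm_le haM hbM
  have hderiv (y : ℝ) (hy : |(discriminantPoly a b p).eval y| ≤ 2) :
      |(discriminantPoly a b p).derivative.eval y| ≤ 2 * D ^ (p + 1) := by
    have hyK := h.mem_spectrum_iff.mpr hy
    exact abs_derivative_discriminant_eval_le (R := 3 * M) hg (fun n => hag n) (fun n => haM n)
      (fun n => hbM n) hD (by linarith) ((spectrum.norm_le_norm_of_mem hyK).trans hK) p
  rw [h.spectrum_eq] at hx ⊢
  obtain ⟨u, v, hxuv, hsub, hlen⟩ := exists_Icc_subset_abs_eval_le h.degree_discriminantPoly_pos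
    (h.splits_discriminantPoly_sub_C (by norm_num))
    (by simpa using h.splits_discriminantPoly_sub_C (c := -2) (by norm_num)) hderiv hx
  refine ⟨u, v, hxuv, hsub, ?_⟩
  rw [inv_pow, ← div_eq_mul_inv, div_le_iff₀ (by positivity)]
  linarith

end IsPeriodicJacobiOperator

end BlochSpectrum

namespace IsJacobiOperator

variable {a b : ℤ → ℝ} {J : ℓ²(ℤ, ℂ) →L[ℂ] ℓ²(ℤ, ℂ)} (hJ : IsJacobiOperator a b J)
include hJ

lemma isBandApproximation_spectrum {a' b' : ℤ → ℝ} {K : ℓ²(ℤ, ℂ) →L[ℂ] ℓ²(ℤ, ℂ)} {p N : ℕ}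
    (hK : IsPeriodicJacobiOperator a' b' p K) (hpN : p ≤ N) {g M D : ℝ} (hg : 0 < g)
    (hag : ∀ n, g ≤ |a' n|) (haM : ∀ n, |a' n| ≤ M) (hbM : ∀ n, |b' n| ≤ M) (hD : 1 ≤ D)
    (hDg : 1 + 5 * M ≤ g * D) (ha : ∀ n, |a n - a' n| ≤ (D⁻¹ / 4) ^ (N + 1))
    (hb : ∀ n, |b n - b' n| ≤ (D⁻¹ / 4) ^ (N + 1)) :
    IsBandApproximation D⁻¹ N (spectrum ℝ K) (spectrum ℝ J) := by
  have hJK : ‖J - K‖ ≤ 3 * (D⁻¹ / 4) ^ (N + 1) := (hJ.sub hK.isJacobiOperator).norm_le ha hb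
  refine ⟨fun x hx => ?_, fun y hy => ?_, fun y hy => ?_, fun U d hd hU => ?_⟩
  · obtain ⟨y, hy, hxy⟩ := exists_mem_spectrum_real_dist_le hK.isJacobiOperator.isSelfAdjoint hx
    exact ⟨y, hy, hxy.trans hJK⟩
  · obtain ⟨x, hx, hyx⟩ := exists_mem_spectrum_real_dist_le hJ.isSelfAdjoint hy
    exact ⟨x, hx, hyx.trans (norm_sub_rev J K ▸ hJK)⟩
  · obtain ⟨u, v, hyuv, hsub, hlen⟩ := hK.exists_Icc_subset_spectrum hg hag haM hbM hD hDg hy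
    have hpow : D⁻¹ ^ (N + 1) ≤ D⁻¹ ^ (p + 1) :=
      pow_le_pow_of_le_one (by positivity) (inv_le_one_of_one_le₀ hD) (by omega)
    exact ⟨u, v, hyuv, hsub, by linarith⟩
  · refine (hK.volume_sdiff_spectrum_le hd hU).trans (ENNReal.ofReal_le_ofReal ?_)
    gcongr

lemma exists_isBandApproximation_spectrum {a' b' : ℤ → ℝ} {p N : ℕ} (hp : 0 < p) (hpN : p ≤ N)
    (hpa : Function.Periodic a' p) (hpb : Function.Periodic b' p) {γ M D : ℝ} (hγ : 0 < γ)
    (haγ : ∀ n, γ ≤ |a n|) (haM : ∀ n, |a n| ≤ M) (hbM : ∀ n, |b n| ≤ M) (hD : 1 ≤ D)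
    (hDγ : 1 + 5 * (M + 1) ≤ γ / 2 * D) (ha : ∀ n, |a n - a' n| ≤ (D⁻¹ / 4) ^ (N + 1))
    (hb : ∀ n, |b n - b' n| ≤ (D⁻¹ / 4) ^ (N + 1)) :
    ∃ S, IsBandApproximation D⁻¹ N S (spectrum ℝ J) := by
  have hM : 0 ≤ M := (abs_nonneg _).trans (haM 0)
  have hD₁ : D⁻¹ ≤ 1 := inv_le_one_of_one_le₀ hD
  have hθD : (D⁻¹ / 4) ^ (N + 1) ≤ D⁻¹ :=
    (pow_le_of_le_one (by positivity) (by linarith) N.succ_ne_zero).trans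
      (div_le_self (by positivity) (by norm_num))
  have hDγ' : D⁻¹ ≤ γ / 2 := (inv_le_iff_one_le_mul₀ (by positivity)).mpr (by linarith)
  have haγ' (n : ℤ) : γ / 2 ≤ |a' n| := by
    linarith [haγ n, ha n, abs_sub_abs_le_abs_sub (a n) (a' n)]
  have haM' (n : ℤ) : |a' n| ≤ M + 1 := by
    linarith [haM n, ha n, abs_sub_abs_le_abs_sub (a' n) (a n), abs_sub_comm (a' n) (a n)]
  have hbM' (n : ℤ) : |b' n| ≤ M + 1 := by
    linarith [hbM n, hb n, abs_sub_abs_le_abs_sub (b' n) (b n), abs_sub_comm (b' n) (b n)]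
  obtain ⟨K, hK, -⟩ := exists_isJacobiOperator_norm_le haM' hbM'
  have ha₀ (n : ℤ) : a' n ≠ 0 := abs_pos.mp ((half_pos hγ).trans_le (haγ' n))
  exact ⟨spectrum ℝ K, hJ.isBandApproximation_spectrum ⟨hK, ha₀, hp, hpa, hpb⟩ hpN (half_pos hγ)
    haγ' haM' hbM' hD hDγ ha hb⟩

end IsJacobiOperator

theorem jacobi_pastur_tkachenko_homogeneous_general {γ : ℝ} (hγ : 0 < γ) {a b : ℤ → ℝ}
    (ha_bdd : ∃ M : ℝ, ∀ n, |a n| ≤ M) (hb_bdd : ∃ M : ℝ, ∀ n, |b n| ≤ M)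
    (haγ : ∀ n, γ ≤ |a n|) {J : ℓ²(ℤ, ℂ) →L[ℂ] ℓ²(ℤ, ℂ)} (hJ : IsJacobiOperator a b J)
    {p : ℕ → ℕ} (hp : ∀ m, 0 < p m) {a' b' : ℕ → ℤ → ℝ}
    (hpa : ∀ m, Function.Periodic (a' m) (p m)) (hpb : ∀ m, Function.Periodic (b' m) (p m))
    (hconv : ∀ C : ℝ, 0 < C → ∀ ε : ℝ, 0 < ε → ∃ m₀ : ℕ, ∀ m ≥ m₀, ∀ n,
      Real.exp (C * p (m + 1)) * max |a' m n - a n| |b' m n - b n| < ε) {τ : ℝ} (hτ : τ < 1) :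
    IsHomogeneous τ (spectrum ℝ J) := by
  obtain ⟨Ma, hMa⟩ := ha_bdd
  obtain ⟨Mb, hMb⟩ := hb_bdd
  set M := max Ma Mb
  have haM (n : ℤ) : |a n| ≤ M := (hMa n).trans (le_max_left _ _)
  have hbM (n : ℤ) : |b n| ≤ M := (hMb n).trans (le_max_right _ _)
  obtain ⟨D, hDγ, hD⟩ : ∃ D, 1 + 5 * (M + 1) ≤ γ / 2 * D ∧ 1 < D :=
    (((Filter.tendsto_id.const_mul_atTop (half_pos hγ)).eventually_ge_atTop _).and
      (Filter.eventually_gt_atTop 1)).exists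
  have hD₁ : D⁻¹ < 1 := inv_lt_one_of_one_lt₀ hD
  obtain ⟨N₀, hN₀⟩ := exists_period_le_and_error_le (fun _ _ => le_max_of_le_left (abs_nonneg _))
    hconv (by positivity : 0 < D⁻¹ / 4) (by linarith)
  refine IsBandApproximation.isHomogeneous_of_forall_exists (N₀ := N₀) (fun N hN => ?_)
    (spectrum.isClosed J) (by positivity) hD₁ hτ
  obtain ⟨m, hmN, herr⟩ := hN₀ N hN
  exact hJ.exists_isBandApproximation_spectrum (hp m) hmN (hpa m) (hpb m) hγ haγ haM hbM hD.le hDγ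
    (fun n => abs_sub_comm (a n) _ ▸ (le_max_left _ _).trans (herr n))
    (fun n => abs_sub_comm (b n) _ ▸ (le_max_right _ _).trans (herr n))

end JacobiOperator

/-- Homogeneity of the spectrum for limit-periodic Jacobi matrices of
Pastur–Tkachenko type: if `J` is a bounded Jacobi matrix with `a n ≥ γ > 0` which is
approximated by `p m`-periodic Jacobi data exponentially fast on every scale (i.e.
`e^{C p (m+1)} sup_n max(|a' m n - a n|, |b' m n - b n|) → 0` for every `C > 0`), then
for every `τ ∈ (0,1)` the spectrum `{E ∈ ℝ : J - E not invertible}` is τ-homogeneous. -/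
theorem jacobi_pastur_tkachenko_homogeneous
    (γ : ℝ) (hγ : 0 < γ) (a b : ℤ → ℝ)
    (ha_bdd : ∃ M : ℝ, ∀ n : ℤ, |a n| ≤ M)
    (hb_bdd : ∃ M : ℝ, ∀ n : ℤ, |b n| ≤ M)
    (ha_lb : ∀ n : ℤ, γ ≤ a n)
    (J : lp (fun _ : ℤ => ℂ) 2 →L[ℂ] lp (fun _ : ℤ => ℂ) 2)
    (hJ : ∀ φ : lp (fun _ : ℤ => ℂ) 2, ∀ n : ℤ,
      (J φ) n = (a (n - 1) : ℂ) * φ (n - 1) + (a n : ℂ) * φ (n + 1) + (b n : ℂ) * φ n)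
    (p : ℕ → ℕ) (hp : ∀ m, 0 < p m)
    (a' b' : ℕ → ℤ → ℝ)
    (hper : ∀ m : ℕ, ∀ n : ℤ,
      a' m (n + (p m : ℤ)) = a' m n ∧ b' m (n + (p m : ℤ)) = b' m n)
    (hpos : ∀ m : ℕ, ∀ n : ℤ, 0 < a' m n)
    (hconv : ∀ C : ℝ, 0 < C → ∀ ε : ℝ, 0 < ε → ∃ M₀ : ℕ, ∀ m ≥ M₀, ∀ n : ℤ,
      Real.exp (C * p (m + 1)) * max |a' m n - a n| |b' m n - b n| < ε) :
    ∀ τ ∈ Set.Ioo (0:ℝ) 1, ∃ δ₀ : ℝ, 0 < δ₀ ∧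
      ∀ x ∈ {E : ℝ | (E : ℂ) ∈ spectrum ℂ J}, ∀ δ : ℝ, 0 < δ → δ ≤ δ₀ →
        ENNReal.ofReal (τ * δ) ≤
          volume (Set.Ioo (x - δ) (x + δ) ∩ {E : ℝ | (E : ℂ) ∈ spectrum ℂ J}) :=
  fun _ hτ => jacobi_pastur_tkachenko_homogeneous_general hγ ha_bdd hb_bdd
    (fun n => (ha_lb n).trans (le_abs_self _)) hJ hp (fun m n => (hper m n).1)
    (fun m n => (hper m n).2) hconv hτ.2
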